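/- arXiv:math/0310017 — 5 statements merged into one kernel-verified Lean document; each statement's English description precedes it below -/
import Mathlib

section
/- Let F : ℝⁿ → ℝⁿ be differentiable at every point of a measurable set E ⊆ ℝⁿ (with derivative F'(z) within E). Then the set A = {z ∈ E : F'(z) is invertible} can be covered by countably many measurable subsets of A on each of which F is injective. -/
/-!
Where `F' z` is invertible, a map `δ`-approximated by `F' z` (with `δ` small compared with `‖(F'
z)⁻¹‖⁻¹`) is injective. Since the space of linear maps is separable, the set `A` of points with
invertible derivative is covered by countably many sets `A ∩ t k`, with `t k` closed, on each of
which `F` is approximated by some `F' y`, `y ∈ A`, to a precision that may depend on `F' y`; this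
is `exists_closed_cover_approximatesLinearOn_of_hasFDerivWithinAt`. These pieces are Lebesgue
measurable because `A` is: the derivative within `E` is a.e. measurable on `E` by
`aemeasurable_fderivWithin`, even though it need not be unique at every point, and the determinant
is continuous.
-/

open MeasureTheory Set

open scoped NNReal

/-- Maps close enough to an invertible linear map are injective, where the precision
depends on `A` alone, not on the map or on the set. It is asserted for every `A`, with no content
for singular `A`, so that a precision function can be chosen on all linear maps. -/
lemma exists_precision_injOn {E : Type*} [NormedAddCommGroup E] [NormedSpace ℝ E]
    [FiniteDimensional ℝ E] (A : E →L[ℝ] E) :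
    ∃ δ : ℝ≥0, δ ≠ 0 ∧ (A.det ≠ 0 → ∀ (f : E → E) (s : Set E),
      ApproximatesLinearOn f A s δ → InjOn f s) := by
  by_cases hA : A.det = 0
  · exact ⟨1, one_ne_zero, fun h => absurd hA h⟩
  let B := A.toContinuousLinearEquivOfDetNeZero hA
  have hB : (B : E →L[ℝ] E) = A := A.coe_toContinuousLinearEquivOfDetNeZero hA
  rcases B.subsingleton_or_nnnorm_symm_pos with h | h
  · exact ⟨1, one_ne_zero, fun _ f s _ => injOn_of_subsingleton f s⟩
  · refine ⟨‖(B.symm : E →L[ℝ] E)‖₊⁻¹ / 2, by positivity, fun _ f s hf => ?_⟩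
    rw [← hB] at hf
    exact hf.injOn (Or.inr (half_lt_self (by positivity)))

/-- If `F` is differentiable at every point of a measurable set `E` (with derivative `F' z`
within `E`), then the set `A = {z ∈ E | F' z invertible}` (equivalently `det (F' z) ≠ 0`)
is covered by countably many (Lebesgue-)measurable subsets of `A`, on each of which `F` is
injective. -/
theorem countable_cover_injective {n : ℕ}
    (F : EuclideanSpace ℝ (Fin n) → EuclideanSpace ℝ (Fin n))
    (F' : EuclideanSpace ℝ (Fin n) →
      (EuclideanSpace ℝ (Fin n) →L[ℝ] EuclideanSpace ℝ (Fin n)))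
    (E : Set (EuclideanSpace ℝ (Fin n))) (hE : MeasurableSet E)
    (hF : ∀ z ∈ E, HasFDerivWithinAt F (F' z) E z) :
    ∃ u : ℕ → Set (EuclideanSpace ℝ (Fin n)),
      (∀ k, NullMeasurableSet (u k) volume) ∧
      (∀ k, u k ⊆ {z ∈ E | (F' z).det ≠ 0}) ∧
      {z ∈ E | (F' z).det ≠ 0} ⊆ ⋃ k, u k ∧
      ∀ k, Set.InjOn F (u k) := by
  set A := {z ∈ E | (F' z).det ≠ 0}
  have hAE : A ⊆ E := fun z hz => hz.1
  have hAmeas : NullMeasurableSet A volume := by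
    have hdet : AEMeasurable (fun z => (F' z).det) (volume.restrict E) :=
      ContinuousLinearMap.continuous_det.measurable.comp_aemeasurable
        (aemeasurable_fderivWithin volume hE hF)
    have h : NullMeasurableSet {z | (F' z).det ≠ 0} (volume.restrict E) :=
      hdet.nullMeasurable (measurableSet_singleton (0 : ℝ)).compl
    have h' := (nullMeasurableSet_restrict hE.nullMeasurableSet).1 h
    rwa [inter_comm] at h'
  choose r r_ne r_inj using
    exists_precision_injOn (E := EuclideanSpace ℝ (Fin n))
  obtain ⟨t, L, t_closed, t_cover, t_approx, hL⟩ :=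
    exists_closed_cover_approximatesLinearOn_of_hasFDerivWithinAt F A F'
      (fun z hz => (hF z (hAE hz)).mono hAE) r r_ne
  refine ⟨fun k => A ∩ t k, fun k => hAmeas.inter (t_closed k).nullMeasurableSet,
    fun k => inter_subset_left, ?_, fun k x hx y hy hxy => ?_⟩
  · rw [← inter_iUnion]
    exact subset_inter Subset.rfl t_cover
  · obtain ⟨z, hz, hLz⟩ := hL ⟨x, hx.1⟩ k
    exact r_inj (L k) (hLz ▸ hz.2) F _ (t_approx k) hx hy hxy
end

section
/- Let A ⊆ ℝⁿ and let F, G : ℝⁿ → ℝⁿ satisfy ‖F(x) − F(y)‖ ≤ ‖G(x) − G(y)‖ for all x, y ∈ A, where G is injective on A. Then volume (F '' A) ≤ volume (G '' A) (as outer measures, i.e. this inequality holds for the Lebesgue outer measure of the images, and in particular for every subset E ⊆ A, volume (F '' E) ≤ volume (G '' E)). -/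
open MeasureTheory Set

/-!
The hypothesis says that `G x ↦ F x` is a well-defined `1`-Lipschitz map from `G '' A` onto
`F '' A`. A `1`-Lipschitz map does not increase the `n`-dimensional Hausdorff outer measure,
and Lebesgue measure on `ℝⁿ` is a constant multiple of that measure
(`EuclideanSpace.euclideanHausdorffMeasure_eq_volume`).
-/

theorem LipschitzOnWith.volume_image_le_of_one {n : ℕ}
    {f : EuclideanSpace ℝ (Fin n) → EuclideanSpace ℝ (Fin n)}
    {s : Set (EuclideanSpace ℝ (Fin n))} (hf : LipschitzOnWith 1 f s) :
    volume (f '' s) ≤ volume s := by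
  have hH := hf.hausdorffMeasure_image_le (d := (n : ℝ)) n.cast_nonneg
  simp only [ENNReal.coe_one, ENNReal.one_rpow, one_mul] at hH
  rw [← EuclideanSpace.euclideanHausdorffMeasure_eq_volume,
    Measure.euclideanHausdorffMeasure_def, Measure.smul_apply, Measure.smul_apply]
  exact smul_le_smul_of_nonneg_left hH zero_le

/-- If `‖F x - F y‖ ≤ ‖G x - G y‖` for all `x, y` in `A` and `G` is injective on `A`, then
(for the Lebesgue outer measure) `volume (F '' E) ≤ volume (G '' E)` for every `E ⊆ A`;
in particular `volume (F '' A) ≤ volume (G '' A)`. -/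
theorem volume_image_le_of_dist_le {n : ℕ}
    (A : Set (EuclideanSpace ℝ (Fin n)))
    (F G : EuclideanSpace ℝ (Fin n) → EuclideanSpace ℝ (Fin n))
    (h : ∀ x ∈ A, ∀ y ∈ A, ‖F x - F y‖ ≤ ‖G x - G y‖)
    (hG : Set.InjOn G A) :
    volume (F '' A) ≤ volume (G '' A) ∧
      ∀ E ⊆ A, volume (F '' E) ≤ volume (G '' E) := by
  have key : ∀ E ⊆ A, volume (F '' E) ≤ volume (G '' E) := by
    intro E hE
    have hinv : ∀ x ∈ E, Function.invFunOn G A (G x) = x := fun x hx =>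
      hG.leftInvOn_invFunOn (hE hx)
    have himg : (F ∘ Function.invFunOn G A) '' (G '' E) = F '' E := by
      rw [image_image]
      exact image_congr fun x hx => by simp [hinv x hx]
    have hlip : LipschitzOnWith 1 (F ∘ Function.invFunOn G A) (G '' E) := by
      refine LipschitzOnWith.of_dist_le_mul ?_
      rintro _ ⟨x, hx, rfl⟩ _ ⟨y, hy, rfl⟩
      simpa [hinv x hx, hinv y hy, dist_eq_norm] using h x (hE hx) y (hE hy)
    exact himg ▸ hlip.volume_image_le_of_one
  exact ⟨key A Subset.rfl, key⟩
end

section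
/- Let L : ℝⁿ → ℝⁿ be an invertible linear map, let 0 < ε < 1, let E ⊆ ℝⁿ be a measurable set, and let F : ℝⁿ → ℝⁿ be injective on E and satisfy (1 − ε)·‖L(x − y)‖ ≤ ‖F(x) − F(y)‖ ≤ (1 + ε)·‖L(x − y)‖ for all x, y ∈ E. Then (1 − ε)ⁿ · |det L| · volume E ≤ volume (F '' E) ≤ (1 + ε)ⁿ · |det L| · volume E (with volume the Lebesgue outer measure applied to F '' E). -/
/-!
Lebesgue measure on `ℝⁿ` is a constant multiple of the `n`-dimensional Hausdorff measure of the
Euclidean metric, so a map that is `K`-Lipschitz on a set multiplies the volume of that set by at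
most `Kⁿ`, with no measurability requirement. More generally (`volume_image_le_of_norm_sub_le`),
if `f` contracts distances by `K` relative to `g` on `E`, then `f` factors on `E` through `g` by a
`K`-Lipschitz map, so `volume (f '' E) ≤ Kⁿ * volume (g '' E)`.

The upper bound compares `F` with `L` (with `K = 1 + ε`), and the lower bound compares `L` with `F`
(with `K = (1 - ε)⁻¹`); finally `volume (L '' E) = |det L| * volume E`.
-/

open MeasureTheory Set

/-- A Lipschitz map scales `n`-dimensional volume by at most `Kⁿ`: this is the corresponding fact
for the Hausdorff measure, of which the volume is a multiple. -/
lemma volume_image_le_of_lipschitzOnWith {n : ℕ} {K : NNReal}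
    {f : EuclideanSpace ℝ (Fin n) → EuclideanSpace ℝ (Fin n)}
    {s : Set (EuclideanSpace ℝ (Fin n))} (hf : LipschitzOnWith K f s) :
    volume (f '' s) ≤ (K : ENNReal) ^ n * volume s := by
  rw [← EuclideanSpace.euclideanHausdorffMeasure_eq_volume n,
    Measure.euclideanHausdorffMeasure_def, Measure.smul_apply, Measure.smul_apply,
    ENNReal.smul_def, ENNReal.smul_def, smul_eq_mul, smul_eq_mul, mul_left_comm]
  gcongr
  simpa using hf.hausdorffMeasure_image_le (d := n) (by positivity)

/-- Relative form of the Lipschitz bound, for two maps on a common arbitrary set: the map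
`g x ↦ f x` is well defined and `K`-Lipschitz on `g '' E`. -/
lemma volume_image_le_of_norm_sub_le {n : ℕ} {K : ℝ} (hK : 0 ≤ K)
    {f g : EuclideanSpace ℝ (Fin n) → EuclideanSpace ℝ (Fin n)}
    {E : Set (EuclideanSpace ℝ (Fin n))}
    (h : ∀ x ∈ E, ∀ y ∈ E, ‖f x - f y‖ ≤ K * ‖g x - g y‖) :
    volume (f '' E) ≤ ENNReal.ofReal (K ^ n) * volume (g '' E) := by
  have hmem : ∀ u ∈ g '' E, Function.invFunOn g E u ∈ E :=
    fun u hu => Function.invFunOn_mem hu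
  have heq : ∀ u ∈ g '' E, g (Function.invFunOn g E u) = u :=
    fun u hu => Function.invFunOn_eq hu
  have hlip : LipschitzOnWith K.toNNReal (f ∘ Function.invFunOn g E) (g '' E) := by
    refine LipschitzOnWith.of_dist_le_mul fun u hu v hv => ?_
    have := h _ (hmem u hu) _ (hmem v hv)
    rw [heq u hu, heq v hv] at this
    simpa [dist_eq_norm, Real.coe_toNNReal K hK] using this
  have hsub : f '' E ⊆ (f ∘ Function.invFunOn g E) '' (g '' E) := by
    rintro _ ⟨x, hx, rfl⟩
    have hgx := mem_image_of_mem g hx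
    refine ⟨g x, hgx, ?_⟩
    have := h _ (hmem _ hgx) x hx
    rw [heq _ hgx, sub_self, norm_zero, mul_zero] at this
    exact sub_eq_zero.mp (norm_le_zero_iff.mp this)
  rw [ENNReal.ofReal_pow hK]
  exact (measure_mono hsub).trans (volume_image_le_of_lipschitzOnWith hlip)

/-- If an injective (on `E`) map `F` is sandwiched between `(1-ε)` and `(1+ε)` multiples of
an invertible linear map `L`, then the (outer) measure of `F '' E` is sandwiched between
`(1-ε)ⁿ |det L| · volume E` and `(1+ε)ⁿ |det L| · volume E`. -/
theorem volume_image_sandwich {n : ℕ}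
    (L : EuclideanSpace ℝ (Fin n) ≃L[ℝ] EuclideanSpace ℝ (Fin n))
    (ε : ℝ) (hε0 : 0 < ε) (hε1 : ε < 1)
    (E : Set (EuclideanSpace ℝ (Fin n))) (hE : MeasurableSet E)
    (F : EuclideanSpace ℝ (Fin n) → EuclideanSpace ℝ (Fin n))
    (hinj : Set.InjOn F E)
    (hF : ∀ x ∈ E, ∀ y ∈ E,
      (1 - ε) * ‖L (x - y)‖ ≤ ‖F x - F y‖ ∧ ‖F x - F y‖ ≤ (1 + ε) * ‖L (x - y)‖) :
    ENNReal.ofReal ((1 - ε) ^ n *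
        |(L : EuclideanSpace ℝ (Fin n) →L[ℝ] EuclideanSpace ℝ (Fin n)).det|) * volume E ≤
        volume (F '' E) ∧
      volume (F '' E) ≤
        ENNReal.ofReal ((1 + ε) ^ n *
          |(L : EuclideanSpace ℝ (Fin n) →L[ℝ] EuclideanSpace ℝ (Fin n)).det|) * volume E := by
  have hpos : 0 < 1 - ε := sub_pos.mpr hε1
  have hL : volume (L '' E) = ENNReal.ofReal
      |(L : EuclideanSpace ℝ (Fin n) →L[ℝ] EuclideanSpace ℝ (Fin n)).det| * volume E :=
    Measure.addHaar_image_continuousLinearMap volume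
      (L : EuclideanSpace ℝ (Fin n) →L[ℝ] EuclideanSpace ℝ (Fin n)) E
  rw [ENNReal.ofReal_mul (by positivity), ENNReal.ofReal_mul (by positivity), mul_assoc,
    mul_assoc, ← hL]
  constructor
  · have hle : volume (L '' E) ≤ ENNReal.ofReal ((1 - ε)⁻¹ ^ n) * volume (F '' E) := by
      refine volume_image_le_of_norm_sub_le (inv_nonneg.mpr hpos.le) fun x hx y hy => ?_
      rw [← map_sub, le_inv_mul_iff₀ hpos]
      exact (hF x hx y hy).1
    calc ENNReal.ofReal ((1 - ε) ^ n) * volume (L '' E)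
        ≤ ENNReal.ofReal ((1 - ε) ^ n) *
            (ENNReal.ofReal ((1 - ε)⁻¹ ^ n) * volume (F '' E)) := by gcongr
      _ = volume (F '' E) := by
        rw [← mul_assoc, ← ENNReal.ofReal_mul (by positivity), ← mul_pow,
          mul_inv_cancel₀ hpos.ne', one_pow, ENNReal.ofReal_one, one_mul]
  · refine volume_image_le_of_norm_sub_le (by positivity) fun x hx y hy => ?_
    rw [← map_sub]
    exact (hF x hx y hy).2
end

section
/- Let F : ℝⁿ → ℝⁿ be differentiable at every point of a measurable set E ⊆ ℝⁿ (with derivative F'(z) within E) and injective on E. Then the image F '' E is Lebesgue measurable, and the set function assigning to each measurable subset S ⊆ E the measure volume (F '' S) is countably additive: for any sequence of pairwise disjoint measurable subsets S₁, S₂, … of E, volume (F '' ⋃ᵢ Sᵢ) = Σᵢ volume (F '' Sᵢ). -/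
open MeasureTheory Set

/-- If `F` is differentiable at every point of a measurable set `E` (with derivative `F' z`
within `E`) and injective on `E`, then `F '' E` is measurable, and `S ↦ volume (F '' S)` is
countably additive on measurable subsets of `E`. -/
theorem image_measure_countably_additive {n : ℕ}
    (F : EuclideanSpace ℝ (Fin n) → EuclideanSpace ℝ (Fin n))
    (F' : EuclideanSpace ℝ (Fin n) →
      (EuclideanSpace ℝ (Fin n) →L[ℝ] EuclideanSpace ℝ (Fin n)))
    (E : Set (EuclideanSpace ℝ (Fin n))) (hE : MeasurableSet E)
    (hF : ∀ z ∈ E, HasFDerivWithinAt F (F' z) E z)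
    (hinj : Set.InjOn F E) :
    MeasurableSet (F '' E) ∧
      ∀ S : ℕ → Set (EuclideanSpace ℝ (Fin n)),
        (∀ i, MeasurableSet (S i)) → (∀ i, S i ⊆ E) →
        Pairwise (Function.onFun Disjoint S) →
        volume (F '' ⋃ i, S i) = ∑' i, volume (F '' S i) := by
  -- A differentiable map is continuous, so by the Lusin–Souslin theorem it sends measurable sets
  -- on which it is injective to measurable sets; this applies to every measurable subset of `E`.
  have himage : ∀ T, MeasurableSet T → T ⊆ E → MeasurableSet (F '' T) := fun T hT hTE =>
    measurable_image_of_fderivWithin hT (fun z hz => (hF z (hTE hz)).mono hTE) (hinj.mono hTE)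
  refine ⟨himage E hE subset_rfl, fun S hS hSE hdisj => ?_⟩
  rw [image_iUnion]
  exact measure_iUnion (fun i j hij => (hdisj hij).image hinj (hSE i) (hSE j))
    fun i => himage (S i) (hS i) (hSE i)
end

section
/- Area formula with the Banach indicatrix: let F : ℝⁿ → ℝⁿ be differentiable at every point of a measurable set E ⊆ ℝⁿ (with derivative F'(z) within E). Then ∫⁻ y in ℝⁿ, N(y) dy = ∫⁻ z in E, |det F'(z)| dz, where N(y) denotes the number (in [0, ∞], i.e. the counting measure) of points z ∈ E with F(z) = y. -/
open MeasureTheory Set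

/-!
The set `E` splits, up to a null set, into a critical part, where `F'` is singular, and a measurable
regular part `R`. Sard's theorem and the fact that differentiable maps preserve null sets show that
`E \ R` has null image, and the Jacobian vanishes almost everywhere on it, so it affects neither side. Near each regular point `F` is a small Lipschitz
perturbation of an invertible linear map, which yields a countable measurable partition of `R` into
pieces on which `F` is injective (`exists_partition_injOn`). On each piece the injective change of
variables formula says that the measure of the image is the integral of the Jacobian; by monotone
convergence it remains to sum over the pieces, because the indicatrix of `R` is the sum of the
indicator functions of the images of the pieces.
-/

variable {V : Type*} [NormedAddCommGroup V] [NormedSpace ℝ V] [FiniteDimensional ℝ V]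

/-- A map that approximates an invertible linear map `A` closely enough on a set is injective there;
the tolerance `r` depends only on `A`. -/
lemma exists_approx_injOn (F : V → V) (A : V →L[ℝ] V) :
    ∃ r : NNReal, r ≠ 0 ∧
      (A.det ≠ 0 → ∀ s : Set V, ApproximatesLinearOn F A s r → InjOn F s) := by
  by_cases hA : A.det = 0
  · exact ⟨1, one_ne_zero, fun h => absurd hA h⟩
  set B := A.toContinuousLinearEquivOfDetNeZero hA with hB
  have hBA : (B : V →L[ℝ] V) = A := by ext x; simp [hB]
  rcases subsingleton_or_nontrivial V with hV | hV
  · exact ⟨1, one_ne_zero, fun _ s _ => injOn_of_injective (Function.injective_of_subsingleton F)⟩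
  · have hpos : 0 < ‖(B.symm : V →L[ℝ] V)‖₊⁻¹ := inv_pos.2 B.nnnorm_symm_pos
    refine ⟨‖(B.symm : V →L[ℝ] V)‖₊⁻¹ / 2, (half_pos hpos).ne', fun _ s hs => ?_⟩
    rw [← hBA] at hs
    exact hs.injOn (Or.inr (half_lt_self hpos))

lemma exists_partition_injOn (F : V → V) (F' : V → V →L[ℝ] V) (s : Set V)
    (hF : ∀ z ∈ s, HasFDerivWithinAt F (F' z) s z) (hdet : ∀ z ∈ s, (F' z).det ≠ 0) :
    ∃ t : ℕ → Set V, Pairwise (Function.onFun Disjoint t) ∧ (∀ k, MeasurableSet[borel V] (t k)) ∧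
      s ⊆ ⋃ k, t k ∧ ∀ k, InjOn F (s ∩ t k) := by
  let _ : MeasurableSpace V := borel V
  have : BorelSpace V := ⟨rfl⟩
  choose r hr0 hr using exists_approx_injOn F
  obtain ⟨t, A, htd, htm, hts, hta, hA⟩ :=
    exists_partition_approximatesLinearOn_of_hasFDerivWithinAt F s F' hF r hr0
  refine ⟨t, htd, htm, hts, fun k => ?_⟩
  rcases s.eq_empty_or_nonempty with rfl | hne
  · simp
  obtain ⟨y, hy, hAy⟩ := hA hne k
  exact hr (A k) (hAy ▸ hdet y hy) _ (hta k)

/-- The fibre of an injective restriction has at most one point, so the indicatrix is the indicator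
function of the image. -/
lemma count_fiber_of_injOn [MeasurableSpace V] [MeasurableSingletonClass V] {F : V → V}
    {s : Set V} (h : InjOn F s) (y : V) :
    Measure.count {z ∈ s | F z = y} = (F '' s).indicator (fun _ => 1) y := by
  by_cases hy : y ∈ F '' s
  · obtain ⟨x, hx, rfl⟩ := hy
    have : {z ∈ s | F z = F x} = {x} := by
      ext z
      simp only [mem_ofPred_eq, mem_singleton_iff]
      exact ⟨fun hz => h hz.1 hx hz.2, fun hz => by simp [hz, hx]⟩
    rw [this, Measure.count_singleton, indicator_of_mem (mem_image_of_mem F hx)]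
  · have : {z ∈ s | F z = y} = ∅ := by
      ext z
      simp only [mem_ofPred_eq, mem_empty_iff_false, iff_false]
      exact fun hz => hy ⟨z, hz⟩
    rw [this, measure_empty, indicator_of_notMem hy]

theorem lintegral_count_fiber_of_det_ne_zero [MeasurableSpace V] [BorelSpace V] (μ : Measure V)
    [μ.IsAddHaarMeasure] (F : V → V) (F' : V → V →L[ℝ] V) (s : Set V) (hs : MeasurableSet s)
    (hF : ∀ z ∈ s, HasFDerivWithinAt F (F' z) s z) (hdet : ∀ z ∈ s, (F' z).det ≠ 0) :
    ∫⁻ y, Measure.count {z ∈ s | F z = y} ∂μ = ∫⁻ z in s, ENNReal.ofReal |(F' z).det| ∂μ := by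
  obtain ⟨t, htd, htm, hts, hti⟩ := exists_partition_injOn F F' s hF hdet
  have htm' : ∀ k, MeasurableSet (t k) := by
    intro k
    rw [BorelSpace.measurable_eq (α := V)]
    exact htm k
  have hsU : s = ⋃ k, s ∩ t k := by rw [← inter_iUnion, inter_eq_left.2 hts]
  have hsm : ∀ k, MeasurableSet (s ∩ t k) := fun k => hs.inter (htm' k)
  have hsd : Pairwise (Function.onFun Disjoint fun k => s ∩ t k) := fun i j hij =>
    (htd hij).mono inter_subset_right inter_subset_right
  have hFk : ∀ k, ∀ z ∈ s ∩ t k, HasFDerivWithinAt F (F' z) (s ∩ t k) z := fun k z hz =>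
    (hF z hz.1).mono inter_subset_left
  have hcount : ∀ y, Measure.count {z ∈ s | F z = y} =
      ∑' k, (F '' (s ∩ t k)).indicator (fun _ => (1 : ENNReal)) y := by
    intro y
    have hU : {z ∈ s | F z = y} = ⋃ k, {z ∈ s ∩ t k | F z = y} := by
      ext z
      have := @hts z
      simp only [mem_ofPred_eq, mem_iUnion, mem_inter_iff] at this ⊢
      grind
    rw [hU, measure_iUnion]
    · exact tsum_congr fun k => count_fiber_of_injOn (hti k) y
    · exact fun i j hij => (hsd hij).mono (sep_subset _ _) (sep_subset _ _)
    · exact fun k => Set.Subsingleton.measurableSet fun a ha b hb =>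
        hti k ha.1 hb.1 (ha.2.trans hb.2.symm)
  have him : ∀ k, MeasurableSet (F '' (s ∩ t k)) := fun k =>
    measurable_image_of_fderivWithin (hsm k) (hFk k) (hti k)
  simp_rw [hcount]
  rw [lintegral_tsum fun k => (measurable_const.indicator (him k)).aemeasurable]
  conv_rhs => rw [hsU, lintegral_iUnion hsm hsd]
  refine tsum_congr fun k => ?_
  rw [lintegral_indicator (him k), setLIntegral_one,
    lintegral_abs_det_fderiv_eq_addHaar_image μ (hsm k) (hFk k) (hti k)]

theorem area_formula_banach_indicatrix {n : ℕ}
    (F : EuclideanSpace ℝ (Fin n) → EuclideanSpace ℝ (Fin n))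
    (F' : EuclideanSpace ℝ (Fin n) →
      (EuclideanSpace ℝ (Fin n) →L[ℝ] EuclideanSpace ℝ (Fin n)))
    (E : Set (EuclideanSpace ℝ (Fin n))) (hE : MeasurableSet E)
    (hF : ∀ z ∈ E, HasFDerivWithinAt F (F' z) E z) :
    ∫⁻ y, Measure.count {z ∈ E | F z = y} =
      ∫⁻ z in E, ENNReal.ofReal |(F' z).det| := by
  set g : EuclideanSpace ℝ (Fin n) → ENNReal := fun z => ENNReal.ofReal |(F' z).det| with hg
  have hgm : AEMeasurable g (volume.restrict E) :=
    aemeasurable_ofReal_abs_det_fderivWithin volume hE hF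
  have hnull : NullMeasurableSet (E ∩ g ⁻¹' {0}ᶜ) volume := by
    rw [inter_comm, ← nullMeasurableSet_restrict hE.nullMeasurableSet]
    exact hgm.nullMeasurable (measurableSet_singleton 0).compl
  -- `F'` is only almost everywhere measurable on `E`, so the regular set is replaced by a
  -- measurable subset `R` of full measure in it.
  obtain ⟨R, hRsub, hR, hRae⟩ := hnull.exists_measurable_subset_ae_eq
  have hRE : R ⊆ E := hRsub.trans inter_subset_left
  have hRdet : ∀ z ∈ R, (F' z).det ≠ 0 := by
    intro z hz h0
    exact (hRsub hz).2 (by simp [hg, h0])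
  have hbad : volume (F '' (E \ R)) = 0 := by
    have hsub : F '' (E \ R) ⊆
        F '' (E ∩ {z | (F' z).det = 0}) ∪ F '' ((E ∩ g ⁻¹' {0}ᶜ) \ R) := by
      rw [← image_union]
      refine image_mono fun z hz => ?_
      by_cases h : (F' z).det = 0
      · exact Or.inl ⟨hz.1, h⟩
      · exact Or.inr ⟨⟨hz.1, by simpa [hg] using h⟩, hz.2⟩
    refine measure_mono_null hsub (measure_union_null ?_ ?_)
    · exact addHaar_image_eq_zero_of_det_fderivWithin_eq_zero volume
        (fun z hz => (hF z hz.1).mono inter_subset_left) fun z hz => hz.2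
    · refine addHaar_image_eq_zero_of_differentiableOn_of_addHaar_eq_zero volume
        (fun z hz => ?_) (ae_le_set.1 hRae.symm.le)
      exact ((hF z hz.1.1).mono (sdiff_subset.trans inter_subset_left)).differentiableWithinAt
  have hleft : ∫⁻ y, Measure.count {z ∈ E | F z = y} = ∫⁻ y, Measure.count {z ∈ R | F z = y} := by
    refine lintegral_congr_ae ?_
    filter_upwards [measure_eq_zero_iff_ae_notMem.1 hbad] with y hy
    congr 1
    ext z
    refine ⟨fun hz => ⟨?_, hz.2⟩, fun hz => ⟨hRE hz.1, hz.2⟩⟩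
    by_contra hzR
    exact hy ⟨z, ⟨hz.1, hzR⟩, hz.2⟩
  have hright : ∫⁻ z in E, g z = ∫⁻ z in R, g z := by
    rw [setLIntegral_congr hRae, ← lintegral_indicator₀ hnull, ← lintegral_indicator hE]
    refine lintegral_congr fun z => ?_
    by_cases hz : z ∈ E <;> by_cases h : g z = 0 <;> simp [indicator, hz, h]
  rw [hleft, hright]
  exact lintegral_count_fiber_of_det_ne_zero volume F F' R hR
    (fun z hz => (hF z (hRE hz)).mono hRE) hRdet
end
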